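/- Let 𝓛 be a quite full lamination system that is loose and totally disconnected. If ℓ₁ and ℓ₂ are distinct leaves of 𝓛 sharing a vertex p (i.e., p ∈ v(ℓ₁) ∩ v(ℓ₂)), then there is a non-leaf gap 𝒢 of 𝓛 having both ℓ₁ and ℓ₂ as boundary leaves and having p as a tip. -/

import Mathlib

/-!
Cut the circle open at `p`, with coordinate `pos p` in `[0, 1)`; good intervals become coordinate
intervals `(s, t)` with `0 ≤ s < t ≤ 1`, or duals of such, and the leaves with vertex `p` become
the intervals `(0, z)`. The two given leaves are `(0, x)` and `(0, y)` with `x < y`.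

The endpoints `z` of leaves at `p` do not fill `[x, y]` (`exists_not_leaf`): a non-leaf gap given
by total disconnectedness for the pair `(0, x)`, `(y, 1)` would be crossed by one of these leaves.
Here the two elements of the gap containing the pair are not required to be distinct; if they
coincide, their common boundary leaf has both endpoints in `[x, y]` and is itself crossed by a leaf
at `p`. Since `L` is closed under unions of ascending sequences (`exists_max`), a missing endpoint
lies between two adjacent leaves `(0, x')` and `(0, y')`, and these bound a non-leaf gap
(`exists_gap`), whose other elements are the largest intervals of `L` inside `(x', y')`.

If `x < x'`, the same argument between `x` and `x'` gives a second non-leaf gap with vertex `p`,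
against looseness; similarly for `y' < y`. So the gap has both given leaves as boundary leaves, and
its elements `(0, x)` and `(y, 1)` cover a punctured neighbourhood of `p`, making `p` a tip.
-/

open Set Filter Topology

namespace Veering

/-- The circle `S¹`: the unit additive circle `ℝ / ℤ`, with its standard
circular order (`sbtw x y z` means the triple `(x,y,z)` is counterclockwise)
and its standard topology. -/
abbrev S1 : Type := UnitAddCircle

/-- A good open interval in `S¹`, recorded by its ordered pair of distinct
endpoints; its carrier is the set of points strictly counterclockwise
between them. -/
structure GoodInt : Type where
  a : S1
  b : S1
  ne : a ≠ b

namespace GoodInt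

/-- The set of points of the good open interval `(a, b)`. -/
def carrier (I : GoodInt) : Set S1 := {z : S1 | sbtw I.a z I.b}

/-- The dual good interval `(u,v)* = (v,u)`. -/
def dual (I : GoodInt) : GoodInt := ⟨I.b, I.a, I.ne.symm⟩

/-- The vertex set `v(ℓ(I)) = {a, b}` of the leaf determined by `I`. -/
def verts (I : GoodInt) : Set S1 := {I.a, I.b}

end GoodInt

/-- `I` and `J` represent the same leaf `ℓ(I) = {I, I*}`. -/
def SameLeaf (I J : GoodInt) : Prop := J = I ∨ J = I.dual

/-- A lamination system: a nonempty collection of good open intervals, closed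
under duals, pairwise unlinked, and closed under unions of ascending chains
(when these unions are good intervals). -/
structure LamSys : Type where
  mem : Set GoodInt
  nonempty : mem.Nonempty
  dual_mem : ∀ I ∈ mem, GoodInt.dual I ∈ mem
  unlinked : ∀ I ∈ mem, ∀ J ∈ mem,
      I.carrier ⊆ J.carrier ∨ I.dual.carrier ⊆ J.carrier ∨
      I.carrier ⊆ J.dual.carrier ∨ I.dual.carrier ⊆ J.dual.carrier
  chain_closed : ∀ c : ℕ → GoodInt, (∀ n, c n ∈ mem) →
      (∀ n, (c n).carrier ⊆ (c (n + 1)).carrier) →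
      ∀ J : GoodInt, J.carrier = ⋃ n, (c n).carrier → J ∈ mem

namespace LamSys

/-- The endpoint set `E(𝓛)`: the union of the vertex sets of all leaves. -/
def E (L : LamSys) : Set S1 := ⋃ I ∈ L.mem, I.verts

/-- A gap of `L`: a set of pairwise disjoint elements of `L` such that every
leaf of `L` lies on one of them. -/
def IsGap (L : LamSys) (G : Set GoodInt) : Prop :=
  G ⊆ L.mem ∧
  (∀ I ∈ G, ∀ J ∈ G, I ≠ J → Disjoint I.carrier J.carrier) ∧
  (∀ I ∈ L.mem, ∃ J ∈ G, I.carrier ⊆ J.carrier ∨ I.dual.carrier ⊆ J.carrier)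

end LamSys

/-- The vertex set `v(𝒢) = S¹ \ ⋃ 𝒢` of a gap. -/
def gapVerts (G : Set GoodInt) : Set S1 := (⋃ I ∈ G, I.carrier)ᶜ

/-- `t` is a tip of `G`: an isolated point of the vertex set of `G`. -/
def IsTipOf (t : S1) (G : Set GoodInt) : Prop :=
  t ∈ gapVerts G ∧ t ∉ closure (gapVerts G \ {t})

/-- A gap that is itself a leaf `{I, I*}`. -/
def IsLeafGap (G : Set GoodInt) : Prop := ∃ I : GoodInt, G = {I, I.dual}

/-- `G` is a crown with tip sequence `t : ℤ → S¹` and pivot `p`. -/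
def IsCrownWith (G : Set GoodInt) (t : ℤ → S1) (p : S1) : Prop :=
  (∀ k, p ≠ t k) ∧ (∀ k, t k ≠ t (k + 1)) ∧
  G = {I : GoodInt | ∃ k : ℤ, I.a = t k ∧ I.b = t (k + 1)} ∧
  gapVerts G = Set.range t ∪ {p}

/-- `G` is a crown. -/
def IsCrown (G : Set GoodInt) : Prop := ∃ t p, IsCrownWith G t p

/-- `p` is the pivot of the crown `G`. -/
def IsPivotOf (p : S1) (G : Set GoodInt) : Prop := ∃ t, IsCrownWith G t p

/-- A lamination system is quite full if every gap is an ideal polygon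
(finitely many vertices) or a crown. -/
def LamSys.QuiteFull (L : LamSys) : Prop :=
  ∀ G : Set GoodInt, L.IsGap G → (gapVerts G).Finite ∨ IsCrown G

/-- `p` is a rainbow point of `L`: there is a strictly descending sequence of
elements of `L` whose intersection is `{p}`. -/
def LamSys.IsRainbowPt (L : LamSys) (p : S1) : Prop :=
  ∃ I : ℕ → GoodInt, (∀ n, I n ∈ L.mem) ∧
    (∀ n, (I (n + 1)).carrier ⊂ (I n).carrier) ∧ (⋂ n, (I n).carrier) = {p}

/-- `L` is loose: distinct non-leaf gaps have disjoint vertex sets. -/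
def LamSys.Loose (L : LamSys) : Prop :=
  ∀ G H : Set GoodInt, L.IsGap G → L.IsGap H → ¬ IsLeafGap G → ¬ IsLeafGap H →
    G ≠ H → Disjoint (gapVerts G) (gapVerts H)

/-- The sequence of leaves represented by `c` converges to the good
interval `J`. -/
def SeqConv (c : ℕ → GoodInt) (J : GoodInt) : Prop :=
  ∃ d : ℕ → GoodInt, (∀ n, SameLeaf (c n) (d n)) ∧
    J.carrier ⊆ Filter.liminf (fun n => (d n).carrier) Filter.atTop ∧
    Filter.limsup (fun n => (d n).carrier) Filter.atTop ⊆ closure J.carrier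

/-- `I ∈ L` admits an `I`-side sequence: a sequence of leaves of `L`, each
distinct from `ℓ(I)` and lying on `I`, converging to `I`.  (`I` is isolated
precisely when this fails.) -/
def LamSys.HasSideSeq (L : LamSys) (I : GoodInt) : Prop :=
  ∃ c : ℕ → GoodInt, (∀ n, c n ∈ L.mem) ∧ (∀ n, ¬ SameLeaf I (c n)) ∧
    (∀ n, (c n).carrier ⊆ I.carrier ∨ (c n).dual.carrier ⊆ I.carrier) ∧
    SeqConv c I

/-- `L` is totally disconnected: every distinct pair is separated by a
non-leaf gap. -/
def LamSys.TotDisc (L : LamSys) : Prop :=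
  ∀ I ∈ L.mem, ∀ J ∈ L.mem, I.carrier ⊂ J.dual.carrier →
    ∃ G : Set GoodInt, L.IsGap G ∧ ¬ IsLeafGap G ∧
      ∃ M ∈ G, ∃ N ∈ G, I.carrier ⊆ M.carrier ∧ J.carrier ⊆ N.carrier

/-- Gaps `G1` and `G2` interleave: every element of each contains exactly one
vertex of the other. -/
def Interleave (G1 G2 : Set GoodInt) : Prop :=
  (∀ I ∈ G1, ∃! x : S1, x ∈ I.carrier ∩ gapVerts G2) ∧
  (∀ I ∈ G2, ∃! x : S1, x ∈ I.carrier ∩ gapVerts G1)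

/-- A pseudo-fibered pair: two quite full, loose, strongly transverse
lamination systems. -/
structure PseudoFibered (L1 L2 : LamSys) : Prop where
  qf1 : L1.QuiteFull
  qf2 : L2.QuiteFull
  loose1 : L1.Loose
  loose2 : L2.Loose
  transverse : L1.E ∩ L2.E = ∅

/-- A veering pair: a pseudo-fibered pair in which every non-leaf gap of one
system admits an interleaving gap in the other. -/
structure VeeringPair (L1 L2 : LamSys) extends PseudoFibered L1 L2 : Prop where
  inter1 : ∀ G : Set GoodInt, L1.IsGap G → ¬ IsLeafGap G →
    ∃ H : Set GoodInt, L2.IsGap H ∧ Interleave G H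
  inter2 : ∀ G : Set GoodInt, L2.IsGap G → ¬ IsLeafGap G →
    ∃ H : Set GoodInt, L1.IsGap H ∧ Interleave G H

/-- An orientation-preserving homeomorphism of the circle: a bijection of
`S¹` which together with its inverse is continuous, and which preserves the
counterclockwise circular order. -/
def PosHomeo (g : Equiv.Perm S1) : Prop :=
  Continuous ⇑g ∧ Continuous ⇑g.symm ∧
  ∀ x y z : S1, sbtw x y z → sbtw (g x) (g y) (g z)

/-- `g ∈ Aut(𝓛)`: an orientation-preserving homeomorphism of `S¹` mapping each
element of `𝓛` to an element of `𝓛`. -/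
def LamSys.InAut (L : LamSys) (g : Equiv.Perm S1) : Prop :=
  PosHomeo g ∧ ∀ I ∈ L.mem, ∃ J ∈ L.mem, J.carrier = ⇑g '' I.carrier

/-- `g` maps the gap `G` onto itself. -/
def MapsGapOnto (g : Equiv.Perm S1) (G : Set GoodInt) : Prop :=
  (∀ I ∈ G, ∃ J ∈ G, J.carrier = ⇑g '' I.carrier) ∧
  (∀ J ∈ G, ∃ I ∈ G, J.carrier = ⇑g '' I.carrier)

/-- The fixed point set of `g` on `S¹`. -/
def FixSet (g : Equiv.Perm S1) : Set S1 := {x : S1 | g x = x}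

/-- The set of periodic points of `g` on `S¹`. -/
def PerSet (g : Equiv.Perm S1) : Set S1 := {x : S1 | ∃ n : ℕ, 0 < n ∧ (g ^ n) x = x}

/-- `p` is an attracting fixed point of `g`. -/
def IsAttractingFix (g : Equiv.Perm S1) (p : S1) : Prop :=
  g p = p ∧ ∃ I : GoodInt, I.carrier ∩ FixSet g = {p} ∧
    ⇑g '' closure I.carrier ⊆ I.carrier

/-- `p` is a repelling fixed point of `g`. -/
def IsRepellingFix (g : Equiv.Perm S1) (p : S1) : Prop :=
  g p = p ∧ ∃ I : GoodInt, I.carrier ∩ FixSet g = {p} ∧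
    I.carrier ⊆ ⇑g '' closure I.carrier

/-- `g` is elliptic: nontrivial of finite order. -/
def Elliptic (g : Equiv.Perm S1) : Prop := g ≠ 1 ∧ IsOfFinOrder g

/-- `g` is parabolic: it has exactly one fixed point. -/
def Parabolic (g : Equiv.Perm S1) : Prop := ∃! x : S1, g x = x

/-- `g` is hyperbolic: exactly two fixed points, one attracting and one
repelling. -/
def Hyperbolic (g : Equiv.Perm S1) : Prop :=
  ∃ a b : S1, a ≠ b ∧ FixSet g = {a, b} ∧ IsAttractingFix g a ∧ IsRepellingFix g b

/-- `g` is pseudo-Anosov-like for the pair `(L1, L2)`: nontrivial, neither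
elliptic nor parabolic, and preserving both gaps of some interleaving pair. -/
def PAlike (L1 L2 : LamSys) (g : Equiv.Perm S1) : Prop :=
  g ≠ 1 ∧ ¬ Elliptic g ∧ ¬ Parabolic g ∧
  ∃ G1 G2 : Set GoodInt, L1.IsGap G1 ∧ L2.IsGap G2 ∧ Interleave G1 G2 ∧
    MapsGapOnto g G1 ∧ MapsGapOnto g G2

/-- `g` is properly pseudo-Anosov: pA-like with nonempty fixed point set. -/
def ProperlyPA (L1 L2 : LamSys) (g : Equiv.Perm S1) : Prop :=
  PAlike L1 L2 g ∧ (FixSet g).Nonempty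

/-- Two leaves are linked: each of the two complementary components of the
vertex set of one contains a vertex of the other. -/
def LeavesLinked (I J : GoodInt) : Prop :=
  (I.carrier ∩ J.verts).Nonempty ∧ (I.dual.carrier ∩ J.verts).Nonempty

/-- Two gaps are linked: they contain a linked pair of boundary leaves. -/
def GapsLinked (G1 G2 : Set GoodInt) : Prop :=
  ∃ I1 ∈ G1, ∃ I2 ∈ G2, LeavesLinked I1 I2

/-- Gaps `G1`, `G2` cross: there are distinct pairs `{I₁, J₁} ⊆ G1`,
`{I₂, J₂} ⊆ G2` such that for each `i`, the vertex set of the other gap is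
contained in `Iᵢ ∪ Jᵢ` and meets `Iᵢ` in exactly one point. -/
def GapsCross (G1 G2 : Set GoodInt) : Prop :=
  ∃ I1 ∈ G1, ∃ J1 ∈ G1, ∃ I2 ∈ G2, ∃ J2 ∈ G2,
    I1.carrier ⊂ J1.dual.carrier ∧ I2.carrier ⊂ J2.dual.carrier ∧
    gapVerts G2 ⊆ I1.carrier ∪ J1.carrier ∧
    (∃! x : S1, x ∈ I1.carrier ∩ gapVerts G2) ∧
    gapVerts G1 ⊆ I2.carrier ∪ J2.carrier ∧
    (∃! x : S1, x ∈ I2.carrier ∩ gapVerts G1)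

/-- The Baumslag–Solitar group `BS(m,n) = ⟨a, b | b aᵐ b⁻¹ = aⁿ⟩`,
with `a = FreeGroup.of false` and `b = FreeGroup.of true`. -/
abbrev BSGroup (m n : ℤ) : Type :=
  PresentedGroup
    ({FreeGroup.of true * FreeGroup.of false ^ m * (FreeGroup.of true)⁻¹ *
        (FreeGroup.of false ^ n)⁻¹} : Set (FreeGroup Bool))

/-! ### Coordinates on the circle cut open at a point -/

/-- The point of the circle at counterclockwise distance `s` from `p`. -/
def pt (p : S1) (s : ℝ) : S1 := p + (s : S1)

/-- The coordinate in `[0, 1)` of a point of the circle cut open at `p`. -/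
noncomputable def pos (p z : S1) : ℝ := (AddCircle.equivIco 1 0 (z - p)).1

lemma pos_nonneg (p z : S1) : 0 ≤ pos p z := (AddCircle.equivIco 1 0 (z - p)).2.1

lemma pos_lt_one (p z : S1) : pos p z < 1 := by
  have h := (AddCircle.equivIco (1 : ℝ) 0 (z - p)).2.2
  exact h.trans_eq (zero_add 1)

lemma pt_pos (p z : S1) : pt p (pos p z) = z := by
  have h := (AddCircle.equivIco (1 : ℝ) 0).symm_apply_apply (z - p)
  have h' : ((pos p z : ℝ) : S1) = z - p := h
  unfold pt
  rw [h']
  abel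

lemma pos_pt (p : S1) {s : ℝ} (h0 : 0 ≤ s) (h1 : s < 1) : pos p (pt p s) = s := by
  unfold pos pt
  rw [add_sub_cancel_left, AddCircle.equivIco_coe_eq (x := s) ⟨h0, by simpa using h1⟩]

lemma pt_zero (p : S1) : pt p 0 = p := by simp [pt]

lemma pt_one (p : S1) : pt p 1 = p := by
  have h : ((1 : ℝ) : S1) = 0 := AddCircle.coe_period 1
  simp [pt, h]

lemma pos_self (p : S1) : pos p p = 0 := by
  simpa [pt_zero] using pos_pt p le_rfl one_pos

/-- On the circle cut open at `p`, the strict circular order is the cyclic order of the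
coordinates. -/
lemma sbtw_pt (p : S1) {s t u : ℝ} (hs : 0 ≤ s) (hs1 : s < 1) (ht : 0 ≤ t) (ht1 : t < 1)
    (hu : 0 ≤ u) (hu1 : u < 1) :
    sbtw (pt p s) (pt p t) (pt p u) ↔
      (s < t ∧ t < u) ∨ (t < u ∧ u < s) ∨ (u < s ∧ s < t) := by
  rw [sbtw_iff_not_btw]
  obtain ⟨q, rfl⟩ := QuotientAddGroup.mk_surjective p
  have key : btw (pt (q : S1) u) (pt (q : S1) t) (pt (q : S1) s) ↔
      toIcoMod one_pos 0 ((q + t) - (q + u)) ≤ toIocMod one_pos 0 ((q + s) - (q + u)) :=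
    Iff.rfl
  have e1 : toIcoMod (one_pos (α := ℝ)) 0 ((q + t) - (q + u)) =
      if u ≤ t then t - u else t - u + 1 := by
    rw [toIcoMod_eq_iff]
    split_ifs with h
    · exact ⟨⟨by linarith, by linarith⟩, 0, by simp⟩
    · exact ⟨⟨by linarith, by linarith⟩, -1, by simp⟩
  have e2 : toIocMod (one_pos (α := ℝ)) 0 ((q + s) - (q + u)) =
      if u < s then s - u else s - u + 1 := by
    rw [toIocMod_eq_iff]
    split_ifs with h
    · exact ⟨⟨by linarith, by linarith⟩, 0, by simp⟩
    · exact ⟨⟨by linarith, by linarith⟩, -1, by simp⟩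
  have key' : btw (pt (QuotientAddGroup.mk q : S1) u) (pt (QuotientAddGroup.mk q : S1) t)
      (pt (QuotientAddGroup.mk q : S1) s) ↔
      (if u ≤ t then t - u else t - u + 1) ≤ (if u < s then s - u else s - u + 1) := by
    rw [← e1, ← e2]; exact key
  rw [key']
  split_ifs with h1 h2 h2
  all_goals grind

/-- `Rep p I s t`: on the circle cut open at `p` (so that `p` has both coordinates `0` and `1`),
the good interval `I` is the coordinate interval `(s, t)`. -/
def Rep (p : S1) (I : GoodInt) (s t : ℝ) : Prop :=
  0 ≤ s ∧ s < t ∧ t ≤ 1 ∧ I.a = pt p s ∧ I.b = pt p t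

lemma Rep.ne {p : S1} {I : GoodInt} {s t : ℝ} (h : Rep p I s t) : 0 < s ∨ t < 1 := by
  obtain ⟨h0, h1, h2, ha, hb⟩ := h
  by_contra hc
  push Not at hc
  have e1 : s = 0 := by linarith
  have e2 : t = 1 := by linarith
  apply I.ne
  rw [ha, hb, e1, e2, pt_zero, pt_one]

lemma GoodInt.ext' {I J : GoodInt} (ha : I.a = J.a) (hb : I.b = J.b) : I = J := by
  cases I; cases J; simp_all

lemma Rep.unique {p : S1} {I J : GoodInt} {s t : ℝ} (h : Rep p I s t) (h' : Rep p J s t) :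
    I = J :=
  GoodInt.ext' (h.2.2.2.1.trans h'.2.2.2.1.symm) (h.2.2.2.2.trans h'.2.2.2.2.symm)

lemma GoodInt.dual_dual (I : GoodInt) : I.dual.dual = I := rfl

lemma Rep.mem {p : S1} {I : GoodInt} {s t : ℝ} (h : Rep p I s t) (z : S1) :
    z ∈ I.carrier ↔ s < pos p z ∧ pos p z < t := by
  have hne := h.ne
  obtain ⟨h0, h1, h2, ha, hb⟩ := h
  have hz := pos_nonneg p z
  have hz1 := pos_lt_one p z
  unfold GoodInt.carrier
  rw [mem_ofPred_eq, ha, hb]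
  nth_rw 1 [← pt_pos p z]
  rcases h2.lt_or_eq with ht | rfl
  · rw [sbtw_pt p h0 (by linarith) hz hz1 (by linarith) ht]
    grind
  · rw [pt_one]
    rw [show sbtw (pt p s) (pt p (pos p z)) p ↔ sbtw (pt p s) (pt p (pos p z)) (pt p 0) by
      rw [pt_zero]]
    rw [sbtw_pt p h0 h1 hz hz1 le_rfl one_pos]
    grind

lemma Rep.mem_dual {p : S1} {I : GoodInt} {s t : ℝ} (h : Rep p I s t) (z : S1) :
    z ∈ I.dual.carrier ↔ (pos p z < s ∨ t < pos p z) ∧ (t = 1 → pos p z ≠ 0) := by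
  have hne := h.ne
  obtain ⟨h0, h1, h2, ha, hb⟩ := h
  have hz := pos_nonneg p z
  have hz1 := pos_lt_one p z
  unfold GoodInt.carrier GoodInt.dual
  rw [mem_ofPred_eq]
  dsimp only
  rw [ha, hb]
  nth_rw 1 [← pt_pos p z]
  rcases h2.lt_or_eq with ht | rfl
  · rw [sbtw_pt p (by linarith) ht hz hz1 h0 (by linarith)]
    grind
  · rw [pt_one]
    nth_rw 1 [← pt_zero p]
    rw [sbtw_pt p le_rfl one_pos hz hz1 h0 h1]
    grind

lemma rep_cases (p : S1) (I : GoodInt) :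
    (∃ s t, Rep p I s t) ∨ ∃ s t, 0 < s ∧ t < 1 ∧ Rep p I.dual s t := by
  have ha := pos_nonneg p I.a
  have hb := pos_nonneg p I.b
  have ha1 := pos_lt_one p I.a
  have hb1 := pos_lt_one p I.b
  rcases lt_trichotomy (pos p I.a) (pos p I.b) with h | h | h
  · exact Or.inl ⟨_, _, ha, h, hb1.le, (pt_pos p _).symm, (pt_pos p _).symm⟩
  · exact absurd (by rw [← pt_pos p I.a, h, pt_pos]) I.ne
  · rcases hb.eq_or_lt with h0 | h0
    · refine Or.inl ⟨_, 1, ha, ha1, le_rfl, (pt_pos p _).symm, ?_⟩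
      rw [pt_one, ← pt_zero p, h0, pt_pos]
    · exact Or.inr ⟨_, _, h0, ha1, hb, h, ha1.le, (pt_pos p _).symm, (pt_pos p _).symm⟩

/-- An interval starting at `p` is dual to the interval from its other endpoint to `p`. -/
lemma Rep.dual_left {p : S1} {I : GoodInt} {t : ℝ} (h : Rep p I 0 t) : Rep p I.dual t 1 := by
  have hne := h.ne
  obtain ⟨h0, h1, h2, ha, hb⟩ := h
  refine ⟨h1.le, by grind, le_rfl, hb, ?_⟩
  rw [pt_one, ← pt_zero p]; exact ha

lemma Rep.dual_right {p : S1} {I : GoodInt} {t : ℝ} (h : Rep p I t 1) : Rep p I.dual 0 t := by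
  have hne := h.ne
  obtain ⟨h0, h1, h2, ha, hb⟩ := h
  refine ⟨le_rfl, by grind, h1.le, ?_, ha⟩
  rw [pt_zero, ← pt_one p]; exact hb

/-! ### Leaves in coordinates -/

/-- `L` has a leaf whose endpoints have coordinates `s < t` on the circle cut open at `p`. -/
def P (L : LamSys) (p : S1) (s t : ℝ) : Prop := ∃ I ∈ L.mem, Rep p I s t

lemma P.swap_left {L : LamSys} {p : S1} {t : ℝ} (h : P L p 0 t) : P L p t 1 := by
  obtain ⟨I, hI, h⟩ := h
  exact ⟨_, L.dual_mem I hI, h.dual_left⟩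

lemma P.swap_right {L : LamSys} {p : S1} {t : ℝ} (h : P L p t 1) : P L p 0 t := by
  obtain ⟨I, hI, h⟩ := h
  exact ⟨_, L.dual_mem I hI, h.dual_right⟩

/-- Leaves are unlinked, in coordinates. The excluded case is that of two leaves with common
endpoint `p`. -/
lemma unlinked_coord {L : LamSys} {p : S1} {a b c d : ℝ} (h : P L p a b) (h' : P L p c d)
    (hac : a < c) (hcb : c < b) (hbd : b < d) (hne : 0 < a ∨ d < 1) : False := by
  obtain ⟨I, hI, rI⟩ := h
  obtain ⟨J, hJ, rJ⟩ := h'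
  have ha0 := rI.1
  have hd1 := rJ.2.2.1
  have tst : ∀ u : ℝ, 0 ≤ u → u < 1 → pos p (pt p u) = u := fun u => pos_pt p
  rcases L.unlinked I hI J hJ with h | h | h | h
  · have := @h (pt p ((a + c) / 2))
    rw [rI.mem, rJ.mem, tst _ (by linarith) (by linarith)] at this
    grind
  · rcases hne with h0 | h0
    · have := @h (pt p 0)
      rw [rI.mem_dual, rJ.mem, tst _ (by linarith) (by linarith)] at this
      grind
    · have := @h (pt p d)
      rw [rI.mem_dual, rJ.mem, tst _ (by linarith) (by linarith)] at this
      grind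
  · have := @h (pt p ((c + b) / 2))
    rw [rI.mem, rJ.mem_dual, tst _ (by linarith) (by linarith)] at this
    grind
  · have := @h (pt p ((b + d) / 2))
    rw [rI.mem_dual, rJ.mem_dual, tst _ (by linarith) (by linarith)] at this
    grind

/-- A family of nested leaves of `L` has a largest member. The family consists of the coordinate
intervals containing `(A, B)` and contained in `(lo, hi)`; it is closed under unions of ascending
sequences because `(lo, hi)` is not the whole circle minus `p`. -/
lemma exists_max {L : LamSys} {p : S1} {lo A B hi : ℝ} (hAB : A < B) (h0 : 0 ≤ lo) (h1 : hi ≤ 1)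
    (hne : 0 < lo ∨ hi < 1)
    (hex : ∃ a b, P L p a b ∧ lo ≤ a ∧ a ≤ A ∧ B ≤ b ∧ b ≤ hi)
    (hcomp : ∀ a b c d, P L p a b → lo ≤ a → a ≤ A → B ≤ b → b ≤ hi →
      P L p c d → lo ≤ c → c ≤ A → B ≤ d → d ≤ hi → (a ≤ c ∧ d ≤ b) ∨ (c ≤ a ∧ b ≤ d)) :
    ∃ a b, P L p a b ∧ lo ≤ a ∧ a ≤ A ∧ B ≤ b ∧ b ≤ hi ∧
      ∀ c d, P L p c d → lo ≤ c → c ≤ A → B ≤ d → d ≤ hi → a ≤ c ∧ d ≤ b := by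
  -- Maximise the length: the lengths determine the position in the nested family.
  set Λ : Set ℝ := {l | ∃ a b, (P L p a b ∧ lo ≤ a ∧ a ≤ A ∧ B ≤ b ∧ b ≤ hi) ∧ l = b - a} with hΛ
  have hΛne : Λ.Nonempty := by
    obtain ⟨a, b, h⟩ := hex
    exact ⟨b - a, a, b, h, rfl⟩
  have hΛbdd : BddAbove Λ := by
    refine ⟨hi - lo, ?_⟩
    rintro l ⟨a, b, h, rfl⟩
    linarith [h.2.1, h.2.2.2.2]
  obtain ⟨u, humono, -, hulim, hu⟩ := (isLUB_csSup hΛne hΛbdd).exists_seq_monotone_tendsto hΛne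
  choose a b hab hlen using hu
  have nested : ∀ n m, n ≤ m → a m ≤ a n ∧ b n ≤ b m := by
    intro n m hnm
    have hl := humono hnm
    rw [hlen, hlen] at hl
    have hn := hab n
    have hm := hab m
    rcases hcomp _ _ _ _ hn.1 hn.2.1 hn.2.2.1 hn.2.2.2.1 hn.2.2.2.2
      hm.1 hm.2.1 hm.2.2.1 hm.2.2.2.1 hm.2.2.2.2 with h | h
    · constructor <;> linarith
    · exact h
  have hanti : Antitone a := fun n m h => (nested n m h).1
  have hmono : Monotone b := fun n m h => (nested n m h).2
  have habdd : BddBelow (range a) := ⟨lo, by rintro _ ⟨n, rfl⟩; exact (hab n).2.1⟩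
  have hbbdd : BddAbove (range b) := ⟨hi, by rintro _ ⟨n, rfl⟩; exact (hab n).2.2.2.2⟩
  have hta := tendsto_atTop_ciInf hanti habdd
  have htb := tendsto_atTop_ciSup hmono hbbdd
  set a' := ⨅ n, a n
  set b' := ⨆ n, b n
  have ha' : ∀ n, a' ≤ a n := fun n => ciInf_le habdd n
  have hb' : ∀ n, b n ≤ b' := fun n => le_ciSup hbbdd n
  have hlo : lo ≤ a' := le_ciInf fun n => (hab n).2.1
  have hhi : b' ≤ hi := ciSup_le fun n => (hab n).2.2.2.2
  have hA : a' ≤ A := (ha' 0).trans (hab 0).2.2.1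
  have hB : B ≤ b' := (hab 0).2.2.2.1.trans (hb' 0)
  have hsup : b' - a' = sSup Λ := by
    refine tendsto_nhds_unique (htb.sub hta) ?_
    refine hulim.congr fun n => hlen n
  have hP : P L p a' b' := by
    choose c hc using fun n => (hab n).1
    have hJne : pt p a' ≠ pt p b' := by
      intro h
      have h2 := pos_pt p (s := a') (by linarith) (by linarith)
      rcases lt_or_ge b' 1 with h3 | h3
      · have h4 := pos_pt p (s := b') (by linarith) h3
        rw [h] at h2
        linarith
      · have h5 : b' = 1 := by linarith
        rw [h, h5, pt_one, pos_self] at h2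
        rcases hne with h6 | h6 <;> linarith
    have rJ : Rep p ⟨pt p a', pt p b', hJne⟩ a' b' :=
      ⟨by linarith, by linarith, by linarith, rfl, rfl⟩
    refine ⟨_, L.chain_closed c (fun n => (hc n).1) ?_ _ ?_, rJ⟩
    · intro n z hz
      have := nested n (n + 1) n.le_succ
      rw [(hc n).2.mem] at hz
      rw [(hc (n + 1)).2.mem]
      constructor <;> linarith
    · ext z
      rw [rJ.mem, mem_iUnion]
      constructor
      · rintro ⟨hz1, hz2⟩
        obtain ⟨n, hn1, hn2⟩ := ((hta.eventually_lt_const hz1).and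
          (htb.eventually_const_lt hz2)).exists
        exact ⟨n, ((hc n).2.mem z).2 ⟨hn1, hn2⟩⟩
      · rintro ⟨n, hn⟩
        have hn := ((hc n).2.mem z).1 hn
        exact ⟨by linarith [ha' n], by linarith [hb' n]⟩
  refine ⟨a', b', hP, hlo, hA, hB, hhi, ?_⟩
  intro c d hcd h2 h3 h4 h5
  have hle : d - c ≤ b' - a' := by
    rw [hsup]
    exact le_csSup hΛbdd ⟨c, d, ⟨hcd, h2, h3, h4, h5⟩, rfl⟩
  rcases hcomp _ _ _ _ hP hlo hA hB hhi hcd h2 h3 h4 h5 with h | h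
  · exact h
  · constructor <;> linarith

lemma exists_rep {p : S1} {I : GoodInt} :
    ∃ J s t, (J = I ∨ J = I.dual) ∧ Rep p J s t := by
  rcases rep_cases p I with ⟨s, t, h⟩ | ⟨s, t, -, -, h⟩
  · exact ⟨I, s, t, Or.inl rfl, h⟩
  · exact ⟨_, s, t, Or.inr rfl, h⟩

lemma Rep.subset {p : S1} {I J : GoodInt} {s t s' t' : ℝ} (h : Rep p I s t) (h' : Rep p J s' t')
    (hs : s' ≤ s) (ht : t ≤ t') : I.carrier ⊆ J.carrier := by
  intro z hz
  rw [h.mem] at hz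
  rw [h'.mem]
  constructor <;> linarith

lemma Rep.pt_mem {p : S1} {I : GoodInt} {s t u : ℝ} (h : Rep p I s t) (hs : s < u) (ht : u < t) :
    pt p u ∈ I.carrier := by
  have := h.1
  have := h.2.2.1
  rw [h.mem, pos_pt p (by linarith) (by linarith)]
  exact ⟨hs, ht⟩

/-! ### Gaps between leaves at `p` -/

/-- Two adjacent leaves at `p` are boundary leaves of a non-leaf gap. The other elements of the
gap are the largest intervals of `L` inside the interval cut off by the two leaves. -/
lemma exists_gap {L : LamSys} {p : S1} {x y : ℝ} (hx : 0 < x) (hxy : x < y) (hy : y < 1)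
    (hPx : P L p 0 x) (hPy : P L p y 1) (hno : ∀ z, x < z → z < y → ¬ P L p 0 z) :
    ∃ G : Set GoodInt, L.IsGap G ∧ ¬ IsLeafGap G ∧ (∃ A ∈ G, Rep p A 0 x) ∧
      (∃ B ∈ G, Rep p B y 1) ∧ p ∈ gapVerts G := by
  set Mx : ℝ → ℝ → Prop := fun s t => x ≤ s ∧ t ≤ y ∧
    ∀ c d, P L p c d → x ≤ c → c ≤ s → t ≤ d → d ≤ y → s ≤ c ∧ d ≤ t with hMx
  set G : Set GoodInt := {I | I ∈ L.mem ∧ ∃ s t, Rep p I s t ∧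
    ((s = 0 ∧ t = x) ∨ (s = y ∧ t = 1) ∨ Mx s t)} with hG
  obtain ⟨A, hA, rA⟩ := hPx
  obtain ⟨B, hB, rB⟩ := hPy
  have hAG : A ∈ G := ⟨hA, 0, x, rA, Or.inl ⟨rfl, rfl⟩⟩
  have hBG : B ∈ G := ⟨hB, y, 1, rB, Or.inr (Or.inl ⟨rfl, rfl⟩)⟩
  refine ⟨G, ⟨fun I hI => hI.1, ?_, ?_⟩, ?_, ⟨A, hAG, rA⟩, ⟨B, hBG, rB⟩, ?_⟩
  · rintro I ⟨hI, s, t, rI, qI⟩ J ⟨hJ, s', t', rJ, qJ⟩ hIJ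
    have hst := rI.2.1
    have hst' := rJ.2.1
    have hcase : (s = s' ∧ t = t') ∨ t ≤ s' ∨ t' ≤ s := by
      rcases qI with q | q | q <;> rcases qJ with q' | q' | q'
      · grind
      · grind
      · obtain ⟨_, _, _⟩ := q'
        right; left; linarith
      · grind
      · grind
      · obtain ⟨_, _, _⟩ := q'
        right; right; linarith
      · obtain ⟨_, _, _⟩ := q
        right; right; linarith
      · obtain ⟨_, _, _⟩ := q
        right; left; linarith
      · by_contra hcon
        push Not at hcon
        obtain ⟨hne, h1, h2⟩ := hcon
        have PI : P L p s t := ⟨I, hI, rI⟩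
        have PJ : P L p s' t' := ⟨J, hJ, rJ⟩
        obtain ⟨q1, q2, q3⟩ := q
        obtain ⟨q1', q2', q3'⟩ := q'
        have u1 : ¬ (s < s' ∧ t < t') := fun h =>
          unlinked_coord PI PJ h.1 h1 h.2 (Or.inl (by linarith))
        have u2 : ¬ (s' < s ∧ t' < t) := fun h =>
          unlinked_coord PJ PI h.1 h2 h.2 (Or.inl (by linarith))
        have m1 := q3 s' t' PJ q1'
        have m2 := q3' s t PI q1
        grind
    rcases hcase with ⟨rfl, rfl⟩ | h | h
    · exact absurd (rI.unique rJ) hIJ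
    all_goals
      rw [Set.disjoint_left]
      intro z hz hz'
      rw [rI.mem] at hz
      rw [rJ.mem] at hz'
      linarith [hz.1, hz.2, hz'.1, hz'.2]
  · intro I hI
    suffices h : ∀ J ∈ L.mem, ∀ a b, Rep p J a b →
        ∃ K ∈ G, J.carrier ⊆ K.carrier ∨ J.dual.carrier ⊆ K.carrier by
      obtain ⟨J, s, t, hJ, rJ⟩ := exists_rep (p := p) (I := I)
      rcases hJ with rfl | rfl
      · exact h _ hI s t rJ
      · obtain ⟨K, hK, hs⟩ := h _ (L.dual_mem I hI) s t rJ
        exact ⟨K, hK, hs.symm⟩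
    intro J hJ a b rJ
    have hab := rJ.2.1
    have PJ : P L p a b := ⟨J, hJ, rJ⟩
    rcases rJ.1.eq_or_lt with rfl | ha
    · have hb : b < 1 := by have := rJ.ne; grind
      rcases le_or_gt b x with h | h
      · exact ⟨A, hAG, Or.inl (rJ.subset rA le_rfl h)⟩
      · rcases le_or_gt y b with h' | h'
        · exact ⟨B, hBG, Or.inr (rJ.dual_left.subset rB h' le_rfl)⟩
        · exact absurd PJ (hno b h h')
    rcases rJ.2.2.1.eq_or_lt with rfl | hb
    · rcases le_or_gt a x with h | h
      · exact ⟨A, hAG, Or.inr (rJ.dual_right.subset rA le_rfl h)⟩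
      · rcases le_or_gt y a with h' | h'
        · exact ⟨B, hBG, Or.inl (rJ.subset rB h' le_rfl)⟩
        · exact absurd PJ.swap_right (hno a h h')
    have u1 : ¬ (a < x ∧ x < b) := fun h =>
      unlinked_coord ⟨A, hA, rA⟩ PJ ha h.1 h.2 (Or.inr hb)
    have u2 : ¬ (a < y ∧ y < b) := fun h =>
      unlinked_coord PJ ⟨B, hB, rB⟩ h.1 h.2 hb (Or.inl ha)
    rcases le_or_gt b x with h | h
    · exact ⟨A, hAG, Or.inl (rJ.subset rA ha.le h)⟩
    rcases le_or_gt y a with h' | h'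
    · exact ⟨B, hBG, Or.inl (rJ.subset rB h' hb.le)⟩
    have hxa : x ≤ a := by grind
    have hby : b ≤ y := by grind
    obtain ⟨s, t, ⟨K, hK, rK⟩, h1, h2, h3, h4, h5⟩ := exists_max (L := L) (p := p) (lo := x)
      (hi := y) hab hx.le hy.le (Or.inl hx) ⟨a, b, PJ, hxa, le_rfl, le_rfl, hby⟩ (by
        intro s t c d Pst _ _ _ _ Pcd _ _ _ _
        have u1 : ¬ (s < c ∧ t < d) := fun h =>
          unlinked_coord Pst Pcd h.1 (by linarith) h.2 (Or.inl (by linarith))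
        have u2 : ¬ (c < s ∧ d < t) := fun h =>
          unlinked_coord Pcd Pst h.1 (by linarith) h.2 (Or.inl (by linarith))
        grind)
    refine ⟨K, ⟨hK, s, t, rK, Or.inr (Or.inr ⟨h1, h4, ?_⟩)⟩, Or.inl (rJ.subset rK h2 h3)⟩
    intro c d Pcd c1 c2 c3 c4
    exact h5 c d Pcd c1 (by linarith) (by linarith) c4
  · rintro ⟨I, hI⟩
    have hpt : pt p x ≠ pt p y := by
      intro h
      have h1 := pos_pt p hx.le (by linarith)
      have h2 := pos_pt p (s := y) (by linarith) hy
      rw [h] at h1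
      linarith
    have hAB : B = A ∨ B = A.dual := by
      rw [hI] at hAG hBG
      rcases hAG with rfl | rfl <;> rcases hBG with rfl | rfl <;> simp [GoodInt.dual_dual]
    rcases hAB with rfl | rfl
    · have h := rB.2.2.2.1
      rw [rA.2.2.2.1] at h
      have h1 := pos_pt p (s := y) (by linarith) hy
      rw [← h, pt_zero, pos_self] at h1
      linarith
    · exact hpt (rA.2.2.2.2.symm.trans rB.2.2.2.1)
  · intro hmem
    obtain ⟨I, ⟨hI, s, t, rI, -⟩, hp⟩ := mem_iUnion₂.1 hmem
    have := (rI.mem p).1 hp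
    rw [pos_self] at this
    linarith [rI.1, this.1]

/-- The endpoints of leaves at `p` cannot fill up a whole interval: for a non-leaf gap provided by
total disconnectedness, some leaf at `p` would lie on no element of the gap, or would cross one of
its boundary leaves. -/
lemma exists_not_leaf {L : LamSys} (htd : L.TotDisc) {p : S1} {x y : ℝ} (hx : 0 < x)
    (hxy : x < y) (hy : y < 1) (hPx : P L p 0 x) (hPy : P L p y 1) :
    ∃ z, x < z ∧ z < y ∧ ¬ P L p 0 z := by
  by_contra hall
  push Not at hall
  obtain ⟨A, hA, rA⟩ := hPx
  obtain ⟨B, hB, rB⟩ := hPy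
  have hss : A.carrier ⊂ B.dual.carrier := by
    refine ⟨rA.subset rB.dual_right le_rfl hxy.le, fun h => ?_⟩
    have h1 := h (rB.dual_right.pt_mem (u := (x + y) / 2) (by linarith) (by linarith))
    rw [rA.mem, pos_pt p (by linarith) (by linarith)] at h1
    linarith [h1.2]
  obtain ⟨G, hG, hGl, M, hM, N, hN, hAM, hBN⟩ := htd A hA B hB hss
  have tA : ∀ u, 0 < u → u < x → pt p u ∈ M.carrier := fun u h h' => hAM (rA.pt_mem h h')
  have tB : ∀ u, y < u → u < 1 → pt p u ∈ N.carrier := fun u h h' => hBN (rB.pt_mem h h')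
  -- Two elements of `G` with a common point are equal.
  have heq : ∀ I ∈ G, ∀ J ∈ G, ∀ z, z ∈ I.carrier → z ∈ J.carrier → I = J := by
    intro I hI J hJ z hz hz'
    by_contra hne
    exact Set.disjoint_left.1 (hG.2.1 I hI J hJ hne) hz hz'
  rcases rep_cases p M with ⟨s, t, rM⟩ | ⟨s, t, hs, ht, rM⟩
  · have hst := rM.2.1
    have hs0 : s = 0 := by
      by_contra h0
      have h0 : 0 < s := lt_of_le_of_ne rM.1 (Ne.symm h0)
      have hm : 0 < min s x := lt_min h0 hx
      have := min_le_left s x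
      have := min_le_right s x
      have h1 := tA (min s x / 2) (by linarith) (by linarith)
      rw [rM.mem, pos_pt p (by linarith) (by linarith)] at h1
      linarith [h1.1]
    subst hs0
    have ht1 : t < 1 := by have := rM.ne; grind
    have hxt : x ≤ t := by
      by_contra h
      push Not at h
      have h1 := tA ((t + x) / 2) (by linarith) (by linarith)
      rw [rM.mem, pos_pt p (by linarith) (by linarith)] at h1
      linarith [h1.2]
    have hMN : M ≠ N := by
      rintro rfl
      have := le_max_left t y
      have := le_max_right t y
      have : max t y < 1 := max_lt ht1 hy
      have h1 := tB ((max t y + 1) / 2) (by linarith) (by linarith)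
      rw [rM.mem, pos_pt p (by linarith) (by linarith)] at h1
      linarith [h1.2]
    rcases rep_cases p N with ⟨s', t', rN⟩ | ⟨s', t', hs', ht', rN⟩
    · have hst' := rN.2.1
      have ht'1 : t' = 1 := by
        by_contra h0
        have h0 : t' < 1 := lt_of_le_of_ne rN.2.2.1 h0
        have := le_max_left t' y
        have := le_max_right t' y
        have : max t' y < 1 := max_lt h0 hy
        have h1 := tB ((max t' y + 1) / 2) (by linarith) (by linarith)
        rw [rN.mem, pos_pt p (by linarith) (by linarith)] at h1
        linarith [h1.2]
      subst ht'1
      have hs'y : s' ≤ y := by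
        by_contra h
        push Not at h
        have h1 := tB ((y + s') / 2) (by linarith) (by linarith)
        rw [rN.mem, pos_pt p (by linarith) (by linarith)] at h1
        linarith [h1.1]
      have hts' : t ≤ s' := by
        by_contra h
        push Not at h
        have h3 := rN.1
        exact hMN (heq M hM N hN (pt p ((s' + t) / 2)) (rM.pt_mem (by linarith) (by linarith))
          (rN.pt_mem (by linarith) (by linarith)))
      rcases hts'.eq_or_lt with rfl | hlt
      · -- Here `N` is the dual of `M`, and no room is left for a third element of `G`.
        have hNM : N = M.dual := rN.unique rM.dual_left
        apply hGl
        refine ⟨M, Set.Subset.antisymm ?_ ?_⟩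
        · intro K hK
          rcases rep_cases p K with ⟨a, b, rK⟩ | ⟨a, b, ha, hb, rK⟩
          · have hab := rK.2.1
            have ha0 := rK.1
            have hb1 := rK.2.2.1
            rcases lt_or_ge a t with h | h
            · left
              have : a < min b t := lt_min hab h
              have := min_le_left b t
              have := min_le_right b t
              exact heq K hK M hM (pt p ((a + min b t) / 2))
                (rK.pt_mem (by linarith) (by linarith)) (rM.pt_mem (by linarith) (by linarith))
            · right
              rw [mem_singleton_iff, ← hNM]
              exact heq K hK N hN (pt p ((a + b) / 2))
                (rK.pt_mem (by linarith) (by linarith)) (rN.pt_mem (by linarith) (by linarith))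
          · left
            have : 0 < min a t := lt_min ha hst
            have := min_le_left a t
            have := min_le_right a t
            refine heq K hK M hM (pt p (min a t / 2)) ?_ (rM.pt_mem (by linarith) (by linarith))
            rw [← K.dual_dual, rK.mem_dual, pos_pt p (by linarith) (by linarith)]
            exact ⟨Or.inl (by linarith), fun h => absurd h hb.ne⟩
        · rintro K (rfl | rfl)
          · exact hM
          · rw [← hNM]; exact hN
      · -- A leaf at `p` ending strictly between `M` and `N` lies on no element of `G`.
        obtain ⟨C, hC, rC⟩ := hall ((t + s') / 2) (by linarith) (by linarith)
        obtain ⟨K, hK, h | h⟩ := hG.2.2 C hC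
        · have hKM : K = M := heq K hK M hM (pt p (t / 2))
            (h (rC.pt_mem (by linarith) (by linarith))) (rM.pt_mem (by linarith) (by linarith))
          subst hKM
          have h1 := h (rC.pt_mem (u := (t + (t + s') / 2) / 2) (by linarith) (by linarith))
          rw [rM.mem, pos_pt p (by linarith) (by linarith)] at h1
          linarith [h1.2]
        · have hKN : K = N := heq K hK N hN (pt p ((s' + 1) / 2))
            (h (rC.dual_left.pt_mem (by linarith) (by linarith)))
            (rN.pt_mem (by linarith) (by linarith))
          subst hKN
          have h1 := h (rC.dual_left.pt_mem (u := (s' + (t + s') / 2) / 2)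
            (by linarith) (by linarith))
          rw [rN.mem, pos_pt p (by linarith) (by linarith)] at h1
          linarith [h1.1]
    · exfalso
      have : 0 < min s' x := lt_min hs' hx
      have := min_le_left s' x
      have := min_le_right s' x
      refine hMN (heq M hM N hN (pt p (min s' x / 2)) (tA _ (by linarith) (by linarith)) ?_)
      rw [← N.dual_dual, rN.mem_dual, pos_pt p (by linarith) (by linarith)]
      exact ⟨Or.inl (by linarith), fun h => absurd h ht'.ne⟩
  · -- Here `p` is interior to `M`, so that `M = N`, and the leaf of `M` crosses a leaf at `p`.
    have hst := rM.2.1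
    have hMN : M = N := by
      have := le_max_left t y
      have := le_max_right t y
      have : max t y < 1 := max_lt ht hy
      refine heq M hM N hN (pt p ((max t y + 1) / 2)) ?_ (tB _ (by linarith) (by linarith))
      rw [← M.dual_dual, rM.mem_dual, pos_pt p (by linarith) (by linarith)]
      exact ⟨Or.inr (by linarith), fun h => absurd h ht.ne⟩
    subst hMN
    have hxs : x ≤ s := by
      by_contra h
      push Not at h
      have : s < min t x := lt_min hst h
      have := min_le_left t x
      have := min_le_right t x
      have h1 := tA ((s + min t x) / 2) (by linarith) (by linarith)
      rw [← M.dual_dual, rM.mem_dual, pos_pt p (by linarith) (by linarith)] at h1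
      rcases h1.1 with h1 | h1 <;> linarith
    have hty : t ≤ y := by
      by_contra h
      push Not at h
      have : max s y < t := max_lt hst h
      have := le_max_left s y
      have := le_max_right s y
      have h1 := tB ((max s y + t) / 2) (by linarith) (by linarith)
      rw [← M.dual_dual, rM.mem_dual, pos_pt p (by linarith) (by linarith)] at h1
      rcases h1.1 with h1 | h1 <;> linarith
    exact unlinked_coord (hall ((s + t) / 2) (by linarith) (by linarith))
      ⟨_, L.dual_mem M (hG.1 hM), rM⟩ hs (by linarith) (by linarith) (Or.inr ht)

/-- Between two leaves at `p` there is a non-leaf gap two of whose boundary leaves end at `p`. -/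
lemma exists_gap_between {L : LamSys} (htd : L.TotDisc) {p : S1} {x y : ℝ} (hx : 0 < x)
    (hxy : x < y) (hy : y < 1) (hPx : P L p 0 x) (hPy : P L p y 1) :
    ∃ G : Set GoodInt, ∃ x' y', x ≤ x' ∧ x' < y' ∧ y' ≤ y ∧ L.IsGap G ∧ ¬ IsLeafGap G ∧
      (∃ A ∈ G, Rep p A 0 x') ∧ (∃ B ∈ G, Rep p B y' 1) ∧ p ∈ gapVerts G := by
  obtain ⟨z, hxz, hzy, hz⟩ := exists_not_leaf htd hx hxy hy hPx hPy
  -- The leaves at `p` adjacent to the missing endpoint `z`, one on either side.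
  obtain ⟨a, x', hPx', ha0, ha0', hxx', hx'z, hmax⟩ := exists_max (L := L) (p := p) (lo := 0)
    (A := 0) (B := x) (hi := z) hx le_rfl (by linarith) (Or.inr (by linarith))
    ⟨0, x, hPx, le_rfl, le_rfl, le_rfl, hxz.le⟩ (by intros; grind)
  obtain rfl : a = 0 := le_antisymm ha0' ha0
  obtain ⟨y', b, hPy', hzy', hy'y, hb1, hb1', hmin⟩ := exists_max (L := L) (p := p) (lo := z)
    (A := y) (B := 1) (hi := 1) hy (by linarith) le_rfl (Or.inl (by linarith))
    ⟨y, 1, hPy, hzy.le, le_rfl, le_rfl, le_rfl⟩ (by intros; grind)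
  obtain rfl : b = 1 := le_antisymm hb1' hb1
  have h1 : x' ≠ z := by rintro rfl; exact hz hPx'
  have h2 : y' ≠ z := by rintro rfl; exact hz hPy'.swap_right
  have h1 : x' < z := lt_of_le_of_ne hx'z h1
  have h2 : z < y' := lt_of_le_of_ne hzy' h2.symm
  obtain ⟨G, hG⟩ := exists_gap (L := L) (p := p) (x := x') (y := y') (by linarith) (by linarith)
    (by linarith) hPx' hPy' (by
      intro w hw1 hw2 hPw
      rcases le_or_gt w z with h | h
      · linarith [(hmax 0 w hPw le_rfl le_rfl (by linarith) h).2]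
      · linarith [(hmin w 1 hPw.swap_left h.le (by linarith) le_rfl le_rfl).1])
  exact ⟨G, x', y', hxx', by linarith, hy'y, hG⟩

/-- Looseness forces the gap of `exists_gap_between` to have the two given leaves themselves as
boundary leaves, since another gap with vertex `p` would lie between. -/
lemma exists_gap_loose {L : LamSys} (hl : L.Loose) (htd : L.TotDisc) {p : S1} {x y : ℝ}
    (hx : 0 < x) (hxy : x < y) (hy : y < 1) (hPx : P L p 0 x) (hPy : P L p y 1) :
    ∃ G : Set GoodInt, L.IsGap G ∧ ¬ IsLeafGap G ∧
      (∃ A ∈ G, Rep p A 0 x) ∧ (∃ B ∈ G, Rep p B y 1) ∧ p ∈ gapVerts G := by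
  obtain ⟨G, x', y', hxx', hxy', hyy', hG, hGl, ⟨A, hA, rA⟩, ⟨B, hB, rB⟩, hp⟩ :=
    exists_gap_between htd hx hxy hy hPx hPy
  have huniq : ∀ H, L.IsGap H → ¬ IsLeafGap H → p ∈ gapVerts H → H = G := by
    intro H hH hHl hpH
    by_contra hne
    exact Set.disjoint_left.1 (hl H G hH hG hHl hGl hne) hpH hp
  have heq : ∀ I ∈ G, ∀ J ∈ G, ∀ z, z ∈ I.carrier → z ∈ J.carrier → I = J := by
    intro I hI J hJ z hz hz'
    by_contra hne
    exact Set.disjoint_left.1 (hG.2.1 I hI J hJ hne) hz hz'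
  have ex : x' = x := by
    by_contra hne
    have hlt : x < x' := lt_of_le_of_ne hxx' (Ne.symm hne)
    obtain ⟨H, x₂, y₂, h1, h2, h3, hH, hHl, ⟨A₂, hA₂, rA₂⟩, -, hpH⟩ :=
      exists_gap_between htd hx hlt (by linarith) hPx (P.swap_left ⟨A, hG.1 hA, rA⟩)
    rw [huniq H hH hHl hpH] at hA₂
    obtain rfl := heq A hA A₂ hA₂ (pt p (x / 2)) (rA.pt_mem (by linarith) (by linarith))
      (rA₂.pt_mem (by linarith) (by linarith))
    have h4 := rA.pt_mem (u := (x₂ + x') / 2) (by linarith) (by linarith)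
    rw [rA₂.mem, pos_pt p (by linarith) (by linarith)] at h4
    linarith [h4.2]
  have ey : y' = y := by
    by_contra hne
    have hlt : y' < y := lt_of_le_of_ne hyy' hne
    obtain ⟨H, x₂, y₂, h1, h2, h3, hH, hHl, -, ⟨B₂, hB₂, rB₂⟩, hpH⟩ :=
      exists_gap_between htd (by linarith) hlt hy (P.swap_right ⟨B, hG.1 hB, rB⟩) hPy
    rw [huniq H hH hHl hpH] at hB₂
    obtain rfl := heq B hB B₂ hB₂ (pt p ((y + 1) / 2)) (rB.pt_mem (by linarith) (by linarith))
      (rB₂.pt_mem (by linarith) (by linarith))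
    have h4 := rB.pt_mem (u := (y' + y₂) / 2) (by linarith) (by linarith)
    rw [rB₂.mem, pos_pt p (by linarith) (by linarith)] at h4
    linarith [h4.1]
  subst ex ey
  exact ⟨G, hG, hGl, ⟨A, hA, rA⟩, ⟨B, hB, rB⟩, hp⟩

/-! ### Tips -/

/-- A gap with an element on either side of `p` has no other vertex near `p`. -/
lemma isTipOf_of_rep {G : Set GoodInt} {p : S1} {A B : GoodInt} {x y : ℝ} (hA : A ∈ G)
    (hB : B ∈ G) (rA : Rep p A 0 x) (rB : Rep p B y 1) (hp : p ∈ gapVerts G) : IsTipOf p G := by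
  refine ⟨hp, fun hcl => ?_⟩
  have hx := rA.2.1
  have hy := rB.2.1
  have hy0 := rB.1
  have hopen : IsOpen (pt p '' Ioo (y - 1) x) := by
    have h1 : IsOpen ((fun t : ℝ => (t : S1)) '' Ioo (y - 1) x) :=
      QuotientAddGroup.isOpenMap_coe _ isOpen_Ioo
    have h2 := (Homeomorph.addLeft p).isOpenMap _ h1
    rw [← image_comp] at h2
    exact h2
  obtain ⟨z, ⟨t, ⟨ht1, ht2⟩, rfl⟩, hz, hzp⟩ :=
    mem_closure_iff.1 hcl _ hopen ⟨0, ⟨by linarith, hx⟩, pt_zero p⟩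
  apply hz
  rw [mem_iUnion₂]
  rcases lt_trichotomy t 0 with h | rfl | h
  · have e : pt p t = pt p (t + 1) := by
      simp [pt]
    exact ⟨B, hB, e ▸ rB.pt_mem (by linarith) (by linarith)⟩
  · exact absurd (pt_zero p) hzp
  · exact ⟨A, hA, rA.pt_mem h ht2⟩

/-- Every leaf with vertex `p` is represented by an interval starting at `p`. -/
lemma exists_rep_left {L : LamSys} {I : GoodInt} {p : S1} (hI : I ∈ L.mem) (hp : p ∈ I.verts) :
    ∃ J ∈ L.mem, (J = I ∨ J = I.dual) ∧ ∃ x, Rep p J 0 x := by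
  suffices h : ∀ J : GoodInt, J.a = p → ∃ x, Rep p J 0 x by
    rcases hp with rfl | rfl
    · exact ⟨I, hI, Or.inl rfl, h I rfl⟩
    · exact ⟨I.dual, L.dual_mem I hI, Or.inr rfl, h _ rfl⟩
  intro J hJ
  refine ⟨pos p J.b, le_rfl, ?_, (pos_lt_one p _).le, by rw [hJ, pt_zero], (pt_pos p _).symm⟩
  refine lt_of_le_of_ne (pos_nonneg p _) fun h => J.ne ?_
  rw [hJ, ← pt_pos p J.b, ← h, pt_zero]

/-- in a quite full, loose, totally disconnected lamination
system, two distinct leaves sharing a vertex `p` are boundary leaves of a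
non-leaf gap with `p` as a tip. -/
theorem statement5 (L : LamSys) (hqf : L.QuiteFull) (hl : L.Loose)
    (htd : L.TotDisc) (I1 I2 : GoodInt)
    (h1 : I1 ∈ L.mem) (h2 : I2 ∈ L.mem) (d : ¬ SameLeaf I1 I2)
    (p : S1) (hp : p ∈ I1.verts ∩ I2.verts) :
    ∃ G : Set GoodInt, L.IsGap G ∧ ¬ IsLeafGap G ∧
      (I1 ∈ G ∨ I1.dual ∈ G) ∧ (I2 ∈ G ∨ I2.dual ∈ G) ∧ IsTipOf p G := by
  obtain ⟨J1, hJ1, e1, x1, r1⟩ := exists_rep_left h1 hp.1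
  obtain ⟨J2, hJ2, e2, x2, r2⟩ := exists_rep_left h2 hp.2
  have hx1 : x1 < 1 := by have := r1.ne; grind
  have hx2 : x2 < 1 := by have := r2.ne; grind
  -- Both leaves, ordered by their endpoints other than `p`.
  have core : ∀ {K1 K2 : GoodInt} {x y : ℝ}, K1 ∈ L.mem → K2 ∈ L.mem → Rep p K1 0 x →
      Rep p K2 0 y → x < y → y < 1 →
      ∃ G : Set GoodInt, L.IsGap G ∧ ¬ IsLeafGap G ∧ K1 ∈ G ∧ K2.dual ∈ G ∧ IsTipOf p G := by
    intro K1 K2 x y hK1 hK2 rK1 rK2 hxy hy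
    obtain ⟨G, hG, hGl, ⟨A, hA, rA⟩, ⟨B, hB, rB⟩, hpG⟩ := exists_gap_loose hl htd rK1.2.1 hxy hy
      ⟨K1, hK1, rK1⟩ (P.swap_left ⟨K2, hK2, rK2⟩)
    refine ⟨G, hG, hGl, ?_, ?_, isTipOf_of_rep hA hB rA rB hpG⟩
    · rwa [rK1.unique rA]
    · rwa [rK2.dual_left.unique rB]
  have back : ∀ {G : Set GoodInt} {I J : GoodInt}, J = I ∨ J = I.dual → (J ∈ G ∨ J.dual ∈ G) →
      (I ∈ G ∨ I.dual ∈ G) := by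
    rintro G I J (rfl | rfl) h
    · exact h
    · exact h.symm
  rcases lt_trichotomy x1 x2 with h | rfl | h
  · obtain ⟨G, hG, hGl, m1, m2, ht⟩ := core hJ1 hJ2 r1 r2 h hx2
    exact ⟨G, hG, hGl, back e1 (Or.inl m1), back e2 (Or.inr m2), ht⟩
  · -- Equal endpoints would make the leaves equal.
    exfalso
    apply d
    have e := r1.unique r2
    subst e
    rcases e1 with rfl | rfl <;> rcases e2 with e2 | e2
    · exact Or.inl e2.symm
    · right; rw [e2, GoodInt.dual_dual]
    · exact Or.inr e2.symm
    · left; rw [← GoodInt.dual_dual I2, ← e2, GoodInt.dual_dual]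
  · obtain ⟨G, hG, hGl, m2, m1, ht⟩ := core hJ2 hJ1 r2 r1 h hx1
    exact ⟨G, hG, hGl, back e1 (Or.inr m1), back e2 (Or.inl m2), ht⟩

end Veering
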